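/- arXiv:2103.11244 — 2 statements merged into one kernel-verified Lean document; each statement's English description precedes it below -/
import Mathlib

section
/- Let M be a finite nonempty set, k ≥ 1, and ε a real number with 0 < ε ≤ 1. Let X := M^{≤k} be the set of tuples over M of length between 1 and k, and let V := EuclideanSpace ℂ over the index type of all functions H : X → Bool, with standard orthonormal basis vectors e_H. For m = (m_1, ..., m_k) ∈ M^k, let S_m be the set of all H : X → Bool with H(m_1, ..., m_i) = true for every i ∈ {1,...,k}. Then there exists a unitary U_m on V such that U_m ( Σ_{H : X → Bool} √(D_ε(H)) · e_H ) = Σ_{H ∈ S_m} √( D_ε(H) / ε^k ) · e_H. (This is Lemma 3.5 of the paper, the existence of the adjusting unitary used by the superposition-aborting verifier.) -/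
/-!
Statement 8 (Lemma 3.5): existence of the adjusting unitary used by the
superposition-aborting verifier.
-/

open scoped BigOperators
open Classical

noncomputable section

/-- `Tup M k`: the set `M^{≤k}` of tuples over `M` of length between 1 and `k`;
`⟨i, f⟩` encodes the tuple `(f 0, …, f i)` of length `i + 1`. -/
def Tup (M : Type) (k : ℕ) : Type := Σ i : Fin k, (Fin (i.1 + 1) → M)

instance (M : Type) (k : ℕ) [Fintype M] : Fintype (Tup M k) := by
  unfold Tup; infer_instance

instance (M : Type) (k : ℕ) [DecidableEq M] : DecidableEq (Tup M k) := by
  unfold Tup; infer_instance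

/-- The prefix `(m_1, …, m_{i+1})` (of length `i+1`) of a full tuple `m ∈ M^k`. -/
def pre {M : Type} {k : ℕ} (m : Fin k → M) (i : Fin k) : Tup M k :=
  ⟨i, fun t => m ⟨t.1, by have := t.isLt; have := i.isLt; omega⟩⟩

/-- The Bernoulli(ε) product weight of a Boolean function `H`:
`D_ε(H) := ∏_u (ε if H u = true, 1 − ε otherwise)`. -/
def bernoulliWeight {X : Type} [Fintype X] (ε : ℝ) (H : X → Bool) : ℝ :=
  ∏ u : X, if H u then ε else 1 - ε

/-!
The unitary group of a finite-dimensional inner product space is transitive on unit vectors, so it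
suffices that both superpositions have norm one. The first does because the Bernoulli weights sum
to one. For the second, the functions that are `true` on a finite set `S` form a product of subsets
of `Bool`, so their total weight factors over the coordinates and equals `ε ^ S.card`. Distinct
prefixes have distinct lengths, hence the prefixes of `m` form a set `S` with `k` elements.
-/

section Hilbert

variable {𝕜 E ι : Type*} [RCLike 𝕜] [NormedAddCommGroup E] [InnerProductSpace 𝕜 E]

lemma exists_linearIsometryEquiv_apply_eq_of_norm_eq_one [FiniteDimensional 𝕜 E] {v w : E}
    (hv : ‖v‖ = 1) (hw : ‖w‖ = 1) : ∃ U : E ≃ₗᵢ[𝕜] E, U v = w := by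
  let L : Submodule.span 𝕜 {v} →ₗᵢ[𝕜] E :=
    (LinearIsometry.toSpanSingleton 𝕜 E hw).comp
      (LinearIsometryEquiv.toSpanUnitSingleton (𝕜 := 𝕜) v hv).symm.toLinearIsometry
  let v' : Submodule.span 𝕜 {v} := ⟨v, Submodule.mem_span_singleton_self v⟩
  have hv' : (LinearIsometryEquiv.toSpanUnitSingleton (𝕜 := 𝕜) v hv).symm v' = 1 := by
    rw [LinearIsometryEquiv.symm_apply_eq]
    ext
    simp [v']
  refine ⟨L.extend.toLinearIsometryEquiv rfl, ?_⟩
  calc L.extend v = L v' := L.extend_apply v'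
    _ = w := by simp [L, hv']

lemma norm_sum_sqrt_smul_of_orthonormal {e : ι → E} (he : Orthonormal 𝕜 e) {s : Finset ι}
    {f : ι → ℝ} (hf : ∀ i ∈ s, 0 ≤ f i) :
    ‖∑ i ∈ s, (√(f i) : 𝕜) • e i‖ = √(∑ i ∈ s, f i) := by
  rw [norm_eq_sqrt_re_inner (𝕜 := 𝕜), he.inner_sum, map_sum]
  congr 1
  refine Finset.sum_congr rfl fun i hi => ?_
  rw [RCLike.conj_ofReal, ← RCLike.ofReal_mul, RCLike.ofReal_re, Real.mul_self_sqrt (hf i hi)]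

end Hilbert

section Bernoulli

variable {X : Type} [Fintype X]

lemma bernoulliWeight_nonneg {ε : ℝ} (hε0 : 0 ≤ ε) (hε1 : ε ≤ 1) (H : X → Bool) :
    0 ≤ bernoulliWeight ε H :=
  Finset.prod_nonneg fun u _ => by split_ifs <;> linarith

lemma sum_bernoulliWeight_filter_true [DecidableEq X] (ε : ℝ) (S : Finset X) :
    ∑ H : X → Bool with ∀ x ∈ S, H x = true, bernoulliWeight ε H = ε ^ S.card := by
  let t (x : X) : Finset Bool := if x ∈ S then {true} else Finset.univ
  have filter_eq : ({H | ∀ x ∈ S, H x = true} : Finset (X → Bool)) = Fintype.piFinset t := by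
    ext H
    simp only [Finset.mem_filter_univ, Fintype.mem_piFinset]
    refine forall_congr' fun x => ?_
    by_cases hx : x ∈ S <;> simp [t, hx]
  have sum_factor (x : X) :
      ∑ b ∈ t x, (if b then ε else 1 - ε) = if x ∈ S then ε else 1 := by
    by_cases hx : x ∈ S <;> simp [t, hx]
  calc ∑ H : X → Bool with ∀ x ∈ S, H x = true, bernoulliWeight ε H
      = ∏ x, ∑ b ∈ t x, (if b then ε else 1 - ε) := by
        rw [filter_eq, Finset.prod_univ_sum]
        rfl
    _ = ε ^ S.card := by simp [sum_factor]

lemma sum_bernoulliWeight [DecidableEq X] (ε : ℝ) :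
    ∑ H : X → Bool, bernoulliWeight ε H = 1 := by
  simpa using sum_bernoulliWeight_filter_true ε (∅ : Finset X)

theorem adjusting_unitary_exists_general [DecidableEq X] {ε : ℝ} (hε0 : 0 < ε) (hε1 : ε ≤ 1)
    (S : Finset X) :
    ∃ U : EuclideanSpace ℂ (X → Bool) ≃ₗᵢ[ℂ] EuclideanSpace ℂ (X → Bool),
      U (∑ H : X → Bool, (√(bernoulliWeight ε H) : ℂ) • EuclideanSpace.single H 1)
        = ∑ H : X → Bool with ∀ x ∈ S, H x = true,
            (√(bernoulliWeight ε H / ε ^ S.card) : ℂ) • EuclideanSpace.single H 1 := by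
  have weight_nonneg (H : X → Bool) : 0 ≤ bernoulliWeight ε H :=
    bernoulliWeight_nonneg hε0.le hε1 H
  have orthonormal_single := EuclideanSpace.orthonormal_single (𝕜 := ℂ) (ι := X → Bool)
  apply exists_linearIsometryEquiv_apply_eq_of_norm_eq_one
  · calc _ = √(∑ H : X → Bool, bernoulliWeight ε H) :=
          norm_sum_sqrt_smul_of_orthonormal orthonormal_single fun H _ => weight_nonneg H
      _ = 1 := by rw [sum_bernoulliWeight, Real.sqrt_one]
  · calc _ = √(∑ H : X → Bool with ∀ x ∈ S, H x = true, bernoulliWeight ε H / ε ^ S.card) :=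
          norm_sum_sqrt_smul_of_orthonormal orthonormal_single fun H _ =>
            div_nonneg (weight_nonneg H) (pow_nonneg hε0.le _)
      _ = 1 := by
        rw [← Finset.sum_div, sum_bernoulliWeight_filter_true, div_self (pow_ne_zero _ hε0.ne'),
          Real.sqrt_one]

end Bernoulli

lemma pre_injective {M : Type} {k : ℕ} (m : Fin k → M) : Function.Injective (pre m) :=
  fun _ _ h => congrArg Sigma.fst h

/-- **Existence of the adjusting unitary (Lemma 3.5).**
For `0 < ε ≤ 1` and a full tuple `m ∈ M^k`, there is a unitary `U_m` on the Hilbert space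
spanned by the basis `{e_H : H : M^{≤k} → Bool}` mapping the "square-root Bernoulli(ε)"
superposition `∑_H √(D_ε H) e_H` to the renormalized superposition
`∑_{H ∈ S_m} √(D_ε H / ε^k) e_H` over the set `S_m` of functions `H` that evaluate to
`true` on every prefix of `m`. -/
theorem adjusting_unitary_exists
    (M : Type) [Fintype M] [DecidableEq M] [Nonempty M]
    (k : ℕ) (hk : 1 ≤ k)
    (ε : ℝ) (hε0 : 0 < ε) (hε1 : ε ≤ 1)
    (m : Fin k → M) :
    ∃ Um : EuclideanSpace ℂ (Tup M k → Bool) ≃ₗᵢ[ℂ] EuclideanSpace ℂ (Tup M k → Bool),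
      Um (∑ H : Tup M k → Bool,
            (Real.sqrt (bernoulliWeight ε H) : ℂ) • EuclideanSpace.single H 1)
        = ∑ H : Tup M k → Bool,
            if ∀ i : Fin k, H (pre m i) = true
            then (Real.sqrt (bernoulliWeight ε H / ε ^ k) : ℂ) • EuclideanSpace.single H 1
            else 0 := by
  simpa [Finset.sum_filter, Finset.card_image_of_injective _ (pre_injective m)] using
    adjusting_unitary_exists_general hε0 hε1 (Finset.univ.image (pre m))
end
end

section
/- Let A and B be natural numbers with 1 ≤ B ≤ A, let M be a finite nonempty set, k ≥ 1, let K' be a finite nonempty set, and let H' : K' → (M^{≤k} → ZMod A) be an arbitrary family of functions. Set K := K' × (Fin k → ZMod A), and for κ = (κ', a) ∈ K define H̃_κ : M^{≤k} → Bool by: H̃_κ(m_1, ..., m_i) = true if and only if ((H'_{κ'}(m_1, ..., m_i)) + a_i).val < B, where .val ∈ {0, ..., A−1} is the canonical representative. For m = (m_1, ..., m_k) ∈ M^k, let S_m := { κ ∈ K : H̃_κ(m_1, ..., m_i) = true for every i ∈ {1,...,k} }. Then the cardinality of S_m equals |K'| · B^k; in particular S_m is nonempty, and there exists a unitary U on EuclideanSpace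 ℂ K such that U ( Σ_{κ ∈ K} |K|^{−1/2} e_κ ) = Σ_{κ ∈ S_m} |S_m|^{−1/2} e_κ. (This is the second item of Lemma 3.12 of the paper, the efficiently implementable adjusting unitary for the shifted hash family.) -/
/-!
Statement 10 (second item of Lemma 3.12): the efficiently implementable adjusting
unitary for the shifted hash family.
-/

open scoped BigOperators
open Classical

noncomputable section

/-- The shifted hash family: for a key `κ = (κ', a)`, the Boolean function
`H̃_κ(u) = true` iff `(H'_{κ'}(u) + a_{len u}).val < B`, where the length of the tuple
`u` selects the coordinate of the shift vector `a`. -/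
def shiftedHash {M K' : Type} {k A : ℕ} [NeZero A] (B : ℕ)
    (H' : K' → Tup M k → ZMod A) (κ : K' × (Fin k → ZMod A)) (u : Tup M k) : Bool :=
  decide ((H' κ.1 u + κ.2 u.1).val < B)

/-- The set `S_m ⊆ K = K' × (ZMod A)^k` of keys whose shifted hash marks every prefix
of the full tuple `m ∈ M^k`. -/
def Sm {M K' : Type} {k A : ℕ} [NeZero A] [Fintype M] [DecidableEq M] [Fintype K']
    (B : ℕ) (H' : K' → Tup M k → ZMod A) (m : Fin k → M) :
    Finset (K' × (Fin k → ZMod A)) :=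
  Finset.univ.filter fun κ => ∀ i : Fin k, shiftedHash B H' κ (pre m i) = true

/-! Adding to `a` the base hash values of the prefixes of `m` is, for each `κ'`, a bijection of the
shift vectors. It carries the condition defining `S_m` to the condition that all `k` coordinates
lie in the `B`-element set `{z | z.val < B}`, whence `|S_m| = |K'| · B ^ k`. Both superpositions
are then unit vectors, and a unitary taking a unit vector `x` to a unit vector `y` is obtained by
multiplying with a phase that makes `⟪y, x⟫` real and then reflecting in the orthogonal complement
of the difference, as in the real case. -/

section Unitary

variable {𝕜 E ι : Type*} [RCLike 𝕜] [NormedAddCommGroup E] [InnerProductSpace 𝕜 E]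

open Submodule

theorem reflection_orthogonal_span_sub_apply {v w : E} (hnorm : ‖v‖ = ‖w‖)
    (hinner : inner 𝕜 v w = inner 𝕜 w v) : (𝕜 ∙ (v - w))ᗮ.reflection v = w := by
  set R := (𝕜 ∙ (v - w))ᗮ.reflection
  have hsub : R (v - w) = -(v - w) := reflection_orthogonalComplement_singleton_eq_neg (v - w)
  have hadd : R (v + w) = v + w := by
    apply reflection_mem_subspace_eq_self
    rw [mem_orthogonal_singleton_iff_inner_left, inner_add_left, inner_sub_right, inner_sub_right,
      inner_self_eq_norm_sq_to_K, inner_self_eq_norm_sq_to_K, hnorm, hinner]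
    ring
  have htwo : (2 : 𝕜) • R v = (2 : 𝕜) • w := by
    rw [← map_smul, show (2 : 𝕜) • v = (v + w) + (v - w) by module, map_add, hadd, hsub]
    module
  exact smul_right_injective E two_ne_zero htwo

variable (𝕜) in
theorem exists_norm_eq_one_inner_smul_comm (x y : E) :
    ∃ c : 𝕜, ‖c‖ = 1 ∧ inner 𝕜 (c • x) y = inner 𝕜 y (c • x) := by
  obtain ⟨c, hc, hreal⟩ := RCLike.exists_norm_eq_mul_self (inner 𝕜 y x)
  refine ⟨c, hc, ?_⟩
  rw [← inner_conj_symm, inner_smul_right, ← hreal, RCLike.conj_ofReal]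

theorem exists_linearIsometryEquiv_apply_eq_smul {c : 𝕜} (hc : ‖c‖ = 1) :
    ∃ U : E ≃ₗᵢ[𝕜] E, ∀ x, U x = c • x :=
  have hc₀ : c ≠ 0 := norm_ne_zero_iff.mp (hc ▸ one_ne_zero)
  ⟨{ LinearEquiv.smulOfNeZero 𝕜 E c hc₀ with
      norm_map' := fun x => (norm_smul c x).trans (by rw [hc, one_mul]) }, fun _ => rfl⟩

variable (𝕜) in
theorem exists_linearIsometryEquiv_apply_eq {x y : E} (h : ‖x‖ = ‖y‖) :
    ∃ U : E ≃ₗᵢ[𝕜] E, U x = y := by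
  obtain ⟨c, hc, hinner⟩ := exists_norm_eq_one_inner_smul_comm 𝕜 x y
  obtain ⟨P, hP⟩ := exists_linearIsometryEquiv_apply_eq_smul (E := E) hc
  have hnorm : ‖c • x‖ = ‖y‖ := by rw [norm_smul, hc, one_mul, h]
  refine ⟨P.trans (𝕜 ∙ (c • x - y))ᗮ.reflection, ?_⟩
  rw [LinearIsometryEquiv.trans_apply, hP, reflection_orthogonal_span_sub_apply hnorm hinner]

theorem norm_sq_sum_smul_of_orthonormal {v : ι → E} (hv : Orthonormal 𝕜 v) (l : ι → 𝕜)
    (s : Finset ι) : ‖∑ i ∈ s, l i • v i‖ ^ 2 = ∑ i ∈ s, ‖l i‖ ^ 2 :=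
  hv.orthogonalFamily.norm_sum l s

variable (𝕜) in
/-- The uniform superposition `∑ i ∈ S, |S|^{-1/2} v i` of the vectors `v i` indexed by `S`, which
is the uniform quantum state on `S` when `v` is orthonormal. It is `0` for `S = ∅`. -/
def uniformSuperposition (v : ι → E) (S : Finset ι) : E :=
  ∑ i ∈ S, ((Real.sqrt S.card : ℝ) : 𝕜)⁻¹ • v i

theorem norm_uniformSuperposition {v : ι → E} (hv : Orthonormal 𝕜 v) {S : Finset ι}
    (hS : S.Nonempty) : ‖uniformSuperposition 𝕜 v S‖ = 1 := by
  have hcard : (S.card : ℝ) ≠ 0 := Nat.cast_ne_zero.mpr hS.card_ne_zero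
  have hweight : ‖((Real.sqrt S.card : ℝ) : 𝕜)⁻¹‖ ^ 2 = (S.card : ℝ)⁻¹ := by
    rw [norm_inv, RCLike.norm_ofReal, inv_pow, sq_abs, Real.sq_sqrt (Nat.cast_nonneg _)]
  rw [← sq_eq_sq₀ (norm_nonneg _) zero_le_one, uniformSuperposition,
    norm_sq_sum_smul_of_orthonormal hv, Finset.sum_const, nsmul_eq_mul, hweight,
    mul_inv_cancel₀ hcard, one_pow]

end Unitary

section Counting

theorem card_filter_fst_add_snd_mem {ι G : Type*} [Fintype ι] [Fintype G] [DecidableEq G]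
    [AddGroup G] (f : ι → G) (S : Finset G) :
    (Finset.univ.filter fun p : ι × G => f p.1 + p.2 ∈ S).card = Fintype.card ι * S.card := by
  rw [← Finset.card_univ, ← Finset.card_product]
  exact Finset.card_equiv ((Equiv.refl ι).prodShear fun i => Equiv.addLeft (f i)) (by simp)

theorem card_filter_zmod_val_lt (n b : ℕ) [NeZero n] :
    (Finset.univ.filter fun z : ZMod n => z.val < b).card = min n b := by
  obtain ⟨n, rfl⟩ := Nat.exists_eq_succ_of_ne_zero (NeZero.ne n)
  exact Fin.card_filter_val_lt

variable {M K' : Type} {k A : ℕ} [NeZero A] [Fintype M] [DecidableEq M] [Fintype K']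

theorem Sm_eq_filter_add_mem_piFinset (B : ℕ) (H' : K' → Tup M k → ZMod A) (m : Fin k → M) :
    Sm B H' m = Finset.univ.filter fun κ => (fun i => H' κ.1 (pre m i)) + κ.2 ∈
      Fintype.piFinset fun _ : Fin k => Finset.univ.filter fun z : ZMod A => z.val < B := by
  ext κ
  simp only [Sm, shiftedHash, Finset.mem_filter_univ, decide_eq_true_iff, Fintype.mem_piFinset]
  exact Iff.rfl

theorem card_Sm (B : ℕ) (H' : K' → Tup M k → ZMod A) (m : Fin k → M) :
    (Sm B H' m).card = Fintype.card K' * min A B ^ k := by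
  rw [Sm_eq_filter_add_mem_piFinset,
    card_filter_fst_add_snd_mem fun κ' i => H' κ' (pre m i), Fintype.card_piFinset_const,
    card_filter_zmod_val_lt]

end Counting

/-- **Adjusting unitary for the shifted hash family (Lemma 3.12, second item).**
With `1 ≤ B ≤ A` and an arbitrary base family `H' : K' → (M^{≤k} → ZMod A)`, the set
`S_m` of keys marking all prefixes of `m` has exactly `|K'| · B^k` elements; in
particular it is nonempty, and there is a unitary mapping the uniform superposition
over `K := K' × (ZMod A)^k` to the uniform superposition over `S_m`. -/
theorem shifted_hash_adjusting_unitary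
    (A B : ℕ) (hB : 1 ≤ B) (hBA : B ≤ A) [NeZero A]
    (M : Type) [Fintype M] [DecidableEq M] [Nonempty M]
    (k : ℕ) (hk : 1 ≤ k)
    (K' : Type) [Fintype K'] [DecidableEq K'] [Nonempty K']
    (H' : K' → Tup M k → ZMod A)
    (m : Fin k → M) :
    (Sm B H' m).card = Fintype.card K' * B ^ k
    ∧ (Sm B H' m).Nonempty
    ∧ ∃ Um : EuclideanSpace ℂ (K' × (Fin k → ZMod A)) ≃ₗᵢ[ℂ]
              EuclideanSpace ℂ (K' × (Fin k → ZMod A)),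
        Um (∑ κ : K' × (Fin k → ZMod A),
              ((Real.sqrt (Fintype.card (K' × (Fin k → ZMod A))))⁻¹ : ℂ) •
                EuclideanSpace.single κ 1)
          = ∑ κ ∈ Sm B H' m,
              ((Real.sqrt ((Sm B H' m).card))⁻¹ : ℂ) • EuclideanSpace.single κ 1 := by
  have hcard : (Sm B H' m).card = Fintype.card K' * B ^ k := by
    rw [card_Sm, min_eq_right hBA]
  have hne : (Sm B H' m).Nonempty := by
    rw [← Finset.card_pos, hcard]
    positivity
  have horth := EuclideanSpace.orthonormal_single (𝕜 := ℂ) (ι := K' × (Fin k → ZMod A))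
  have hnorm := (norm_uniformSuperposition horth Finset.univ_nonempty).trans
    (norm_uniformSuperposition horth hne).symm
  exact ⟨hcard, hne, exists_linearIsometryEquiv_apply_eq ℂ hnorm⟩
end
end
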